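/- Let ℓ_{k,i} (k = 1,…,m; i = 1,2,…) be real numbers, let ρ_1,…,ρ_m > 0 and a, b ≥ 0. Define: τ(a,b) = inf{n ≥ 1 : Σ_{i=1}^n Σ_{k=1}^m ℓ_{k,i} ≥ a and Σ_{i=1}^n ℓ_{k,i} ≥ ρ_k b for all 1 ≤ k ≤ m}; M_k = inf{n ≥ 1 : Σ_{i=1}^n ℓ_{k,i} ≥ ρ_k b}; τ_k = sup{n ≥ 1 : Σ_{i=M_k+1}^{M_k+n} ℓ_{k,i} ≤ 0} (set τ_k = 0 if the set is empty); M̂ = max_{1≤k≤m}(M_k + τ_k + 1); and t(M̂) = inf{n ≥ 1 : Σ_{i=M̂+1}^{M̂+n} Σ_{k=1}^m ℓ_{k,i} ≥ a − (Σ_{k=1}^m ρ_k) b}. If M_k and τ_k are finite for all k and t(M̂) is finite, then τ(a,b) ≤ M̂ + t(M̂), and consequently τ(a,b) ≤ Σ_{k=1}^m τ_k + 1 + t(M̂) + max_{1≤k≤m} M_k. -/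

import Mathlib

/-!
A stream that has reached its level at time `M k` can only fall below it again while its increments
summed from `M k` are negative, hence never after `M k + τ k`. So at every time from `M̂` on all the
streams are above their levels at once; in particular their combined sum at `M̂` is at least
the sum of the levels, and the increments after `M̂` only have to supply the rest of `a`.
-/

section PathwiseBound

open Finset

variable {ι G : Type*}

/-- The positive times at which the path `S` is at or above the level `c`. Its infimum is the
first passage time; time `0` is excluded, so that this is at least `1` even when `c ≤ S 0`. -/
def passageTimes [LE G] (S : ℕ → G) (c : G) : Set ℕ :=
  {n | 1 ≤ n ∧ c ≤ S n}

/-- The positive lags `n` at which the walk with increments `x`, restarted at time `s`, is not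
positive. Its supremum is the last crossing time `τ_k` of a stream. In `ℕ`, `sSup` is `0` on the
empty set, as wanted for a walk which stays positive, but also on an unbounded set. -/
def nonposLags [AddCommMonoid G] [LE G] (x : ℕ → G) (s : ℕ) : Set ℕ :=
  {n | 1 ≤ n ∧ ∑ i ∈ Ioc s (s + n), x i ≤ 0}

/-- The stopping time `τ(a, b)` of the one-sided SPRT, with an arbitrary censoring level `c k` in
place of `ρ k * b`. It takes values in `ℕ∞`, and is `⊤` if the procedure never stops. -/
noncomputable def sprtStoppingTime [Fintype ι] [AddCommMonoid G] [LE G] (ℓ : ι → ℕ → G)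
    (c : ι → G) (a : G) : ℕ∞ :=
  ⨅ (n : ℕ) (_ : 1 ≤ n ∧ (a ≤ ∑ i ∈ Icc 1 n, ∑ k, ℓ k i) ∧ ∀ k, c k ≤ ∑ i ∈ Icc 1 n, ℓ k i),
    (n : ℕ∞)

theorem sum_Icc_one_add_sum_Ioc [AddCommMonoid G] (x : ℕ → G) {p q : ℕ} (hpq : p ≤ q) :
    ∑ i ∈ Icc 1 p, x i + ∑ i ∈ Ioc p q, x i = ∑ i ∈ Icc 1 q, x i :=
  sum_Ioc_consecutive x p.zero_le hpq

theorem sup_add_add_one_le_sup_add_sum (s : Finset ι) (f g : ι → ℕ) :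
    (s.sup fun k => f k + g k + 1) ≤ s.sup f + ∑ k ∈ s, g k + 1 :=
  Finset.sup_le fun _ hk =>
    Nat.add_le_add_right (Nat.add_le_add (le_sup hk) (single_le_sum_of_canonicallyOrdered hk)) 1

theorem sum_Ioc_pos_of_sSup_nonposLags_lt [AddCommMonoid G] [LinearOrder G] {x : ℕ → G} {s n : ℕ}
    (hbdd : BddAbove (nonposLags x s)) (hn : sSup (nonposLags x s) < n) :
    0 < ∑ i ∈ Ioc s (s + n), x i := by
  by_contra! hle
  exact hn.not_ge (le_csSup hbdd ⟨Nat.one_le_of_lt hn, hle⟩)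

theorem le_sum_Icc_one_of_add_sSup_nonposLags_lt [AddCommMonoid G] [LinearOrder G]
    [IsOrderedAddMonoid G] {x : ℕ → G} {c : G} {s n : ℕ}
    (hs : c ≤ ∑ i ∈ Icc 1 s, x i) (hbdd : BddAbove (nonposLags x s))
    (hn : s + sSup (nonposLags x s) < n) : c ≤ ∑ i ∈ Icc 1 n, x i := by
  obtain ⟨d, rfl⟩ := Nat.exists_eq_add_of_le (le_self_add.trans hn.le)
  have hpos : 0 < ∑ i ∈ Ioc s (s + d), x i :=
    sum_Ioc_pos_of_sSup_nonposLags_lt hbdd (Nat.lt_of_add_lt_add_left hn)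
  rw [← sum_Icc_one_add_sum_Ioc x (Nat.le_add_right s d)]
  exact le_add_of_le_of_nonneg hs hpos.le

variable [Fintype ι] [AddCommGroup G]

theorem le_sum_Icc_one_sum_of_sub_le [PartialOrder G] [IsOrderedAddMonoid G] {ℓ : ι → ℕ → G}
    {c : ι → G} {a : G} {p q : ℕ} (hpq : p ≤ q) (hp : ∀ k, c k ≤ ∑ i ∈ Icc 1 p, ℓ k i)
    (hq : a - ∑ k, c k ≤ ∑ i ∈ Ioc p q, ∑ k, ℓ k i) :
    a ≤ ∑ i ∈ Icc 1 q, ∑ k, ℓ k i :=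
  calc
    a ≤ ∑ k, c k + ∑ i ∈ Ioc p q, ∑ k, ℓ k i := sub_le_iff_le_add'.mp hq
    _ ≤ ∑ k, ∑ i ∈ Icc 1 p, ℓ k i + ∑ i ∈ Ioc p q, ∑ k, ℓ k i := by gcongr with k; exact hp k
    _ = ∑ i ∈ Icc 1 q, ∑ k, ℓ k i := by rw [sum_comm, sum_Icc_one_add_sum_Ioc _ hpq]

theorem sprtStoppingTime_le_add [PartialOrder G] [IsOrderedAddMonoid G] {ℓ : ι → ℕ → G}
    {c : ι → G} {a : G} {p t : ℕ}
    (hp : ∀ k, ∀ n ≥ p, c k ≤ ∑ i ∈ Icc 1 n, ℓ k i)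
    (ht : t ∈ passageTimes (fun n => ∑ i ∈ Ioc p (p + n), ∑ k, ℓ k i) (a - ∑ k, c k)) :
    sprtStoppingTime ℓ c a ≤ ((p + t : ℕ) : ℕ∞) := by
  have hpt : p ≤ p + t := Nat.le_add_right p t
  exact iInf₂_le (p + t) ⟨le_add_left ht.1,
    le_sum_Icc_one_sum_of_sub_le hpt (fun k => hp k p le_rfl) ht.2, fun k => hp k (p + t) hpt⟩

theorem sprt_pathwise_bound_general [LinearOrder G] [IsOrderedAddMonoid G] (ℓ : ι → ℕ → G)
    (c : ι → G) (a : G)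
    (M : ι → ℕ) (hM : ∀ k, M k = sInf (passageTimes (fun n => ∑ i ∈ Icc 1 n, ℓ k i) (c k)))
    (hMfin : ∀ k, (passageTimes (fun n => ∑ i ∈ Icc 1 n, ℓ k i) (c k)).Nonempty)
    (τ : ι → ℕ) (hτ : ∀ k, τ k = sSup (nonposLags (ℓ k) (M k)))
    (hτfin : ∀ k, BddAbove (nonposLags (ℓ k) (M k)))
    (Mhat : ℕ) (hMhat : Mhat = univ.sup fun k => M k + τ k + 1)
    (t : ℕ)
    (ht : t = sInf
      (passageTimes (fun n => ∑ i ∈ Ioc Mhat (Mhat + n), ∑ k, ℓ k i) (a - ∑ k, c k)))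
    (htfin :
      (passageTimes (fun n => ∑ i ∈ Ioc Mhat (Mhat + n), ∑ k, ℓ k i) (a - ∑ k, c k)).Nonempty) :
    sprtStoppingTime ℓ c a ≤ ((Mhat + t : ℕ) : ℕ∞) ∧
      sprtStoppingTime ℓ c a ≤ (((∑ k, τ k) + 1 + t + univ.sup M : ℕ) : ℕ∞) := by
  have level_le : ∀ k, ∀ n ≥ Mhat, c k ≤ ∑ i ∈ Icc 1 n, ℓ k i := by
    intro k n hn
    have reached : c k ≤ ∑ i ∈ Icc 1 (M k), ℓ k i := hM k ▸ (Nat.sInf_mem (hMfin k)).2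
    have lt_Mhat : M k + τ k < Mhat :=
      hMhat ▸ le_sup (f := fun k => M k + τ k + 1) (mem_univ k)
    exact le_sum_Icc_one_of_add_sSup_nonposLags_lt reached (hτfin k) (hτ k ▸ lt_Mhat.trans_le hn)
  have stop_le : sprtStoppingTime ℓ c a ≤ ((Mhat + t : ℕ) : ℕ∞) :=
    sprtStoppingTime_le_add level_le (ht ▸ Nat.sInf_mem htfin)
  have Mhat_le : Mhat ≤ univ.sup M + ∑ k, τ k + 1 :=
    hMhat ▸ sup_add_add_one_le_sup_add_sum univ M τ
  exact ⟨stop_le, stop_le.trans (Nat.cast_le.mpr (by omega))⟩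

end PathwiseBound

/-- deterministic pathwise bound for the one-sided SPRT-type stopping time:
with increments `ℓ k i` (stream `k = 1,…,m`, time `i = 1,2,…`), weights `ρ k > 0` and levels
`a, b ≥ 0`, define `τ(a,b)` as the first `n ≥ 1` at which the combined partial sum reaches `a`
while each stream's partial sum reaches `ρ k * b`; `M k` as the first `n ≥ 1` at which stream
`k`'s partial sum reaches `ρ k * b`; `τ k` as the last `n ≥ 1` with
`∑_{i = M k + 1}^{M k + n} ℓ k i ≤ 0` (`0` if there is none); `M̂ = max_k (M k + τ k + 1)`;
and `t(M̂)` as the first `n ≥ 1` with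
`∑_{i = M̂ + 1}^{M̂ + n} ∑ₖ ℓ k i ≥ a - (∑ₖ ρ k) b`. If every `M k` and `τ k` is finite and
`t(M̂)` is finite, then `τ(a,b) ≤ M̂ + t(M̂)`, and consequently
`τ(a,b) ≤ ∑ₖ τ k + 1 + t(M̂) + max_k M k`. -/
theorem sprt_pathwise_bound (m : ℕ) (hm : 1 ≤ m) (ℓ : Fin m → ℕ → ℝ)
    (ρ : Fin m → ℝ) (hρ : ∀ k, 0 < ρ k) (a b : ℝ) (ha : 0 ≤ a) (hb : 0 ≤ b)
    (M : Fin m → ℕ)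
    (hM : ∀ k, M k = sInf {n : ℕ | 1 ≤ n ∧ ρ k * b ≤ ∑ i ∈ Finset.Icc 1 n, ℓ k i})
    (hMfin : ∀ k, {n : ℕ | 1 ≤ n ∧ ρ k * b ≤ ∑ i ∈ Finset.Icc 1 n, ℓ k i}.Nonempty)
    (τ : Fin m → ℕ)
    (hτ : ∀ k, τ k = sSup {n : ℕ | 1 ≤ n ∧ ∑ i ∈ Finset.Ioc (M k) (M k + n), ℓ k i ≤ 0})
    (hτfin : ∀ k, BddAbove {n : ℕ | 1 ≤ n ∧ ∑ i ∈ Finset.Ioc (M k) (M k + n), ℓ k i ≤ 0})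
    (Mhat : ℕ) (hMhat : Mhat = Finset.univ.sup fun k => M k + τ k + 1)
    (t : ℕ)
    (ht : t = sInf {n : ℕ | 1 ≤ n ∧
      a - (∑ k, ρ k) * b ≤ ∑ i ∈ Finset.Ioc Mhat (Mhat + n), ∑ k, ℓ k i})
    (htfin : {n : ℕ | 1 ≤ n ∧
      a - (∑ k, ρ k) * b ≤ ∑ i ∈ Finset.Ioc Mhat (Mhat + n), ∑ k, ℓ k i}.Nonempty) :
    (⨅ (n : ℕ) (_ : 1 ≤ n ∧ (a ≤ ∑ i ∈ Finset.Icc 1 n, ∑ k, ℓ k i) ∧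
        ∀ k, ρ k * b ≤ ∑ i ∈ Finset.Icc 1 n, ℓ k i), (n : ℕ∞)) ≤ ((Mhat + t : ℕ) : ℕ∞) ∧
      (⨅ (n : ℕ) (_ : 1 ≤ n ∧ (a ≤ ∑ i ∈ Finset.Icc 1 n, ∑ k, ℓ k i) ∧
        ∀ k, ρ k * b ≤ ∑ i ∈ Finset.Icc 1 n, ℓ k i), (n : ℕ∞)) ≤
        (((∑ k, τ k) + 1 + t + Finset.univ.sup M : ℕ) : ℕ∞) := by
  rw [Finset.sum_mul] at ht htfin
  exact sprt_pathwise_bound_general ℓ _ a M hM hMfin τ hτ hτfin Mhat hMhat t ht htfin
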